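/- The kernel function Γ attains a minimum on [0,∞): there exists h_n* ≥ 0 such that Γ(h_n*) ≤ Γ(h) for all h ≥ 0. (This is the optimal normalized hovering altitude, determined only by the environment.) -/

import Mathlib

open Real MeasureTheory intervalIntegral

/-- The logistic function takes values in `[0, 1]`. -/
lemma logistic_mem_Icc {a : ℝ} (ha : 0 < a) (t : ℝ) :
    1 / (1 + a * exp t) ∈ Set.Icc (0 : ℝ) 1 := by
  have h : 0 < a * exp t := by positivity
  exact ⟨by positivity, by rw [div_le_one (by positivity)]; linarith⟩

/-- A convex combination of two reals lies between their minimum and maximum. -/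
lemma add_mul_sub_mem_Icc_min_max {p : ℝ} (hp : p ∈ Set.Icc (0 : ℝ) 1) (u v : ℝ) :
    v + p * (u - v) ∈ Set.Icc (min u v) (max u v) := by
  obtain ⟨h0, h1⟩ := hp
  constructor
  · nlinarith [mul_le_mul_of_nonneg_left (min_le_left u v) h0,
      mul_le_mul_of_nonneg_left (min_le_right u v) (sub_nonneg.2 h1)]
  · nlinarith [mul_le_mul_of_nonneg_left (le_max_left u v) h0,
      mul_le_mul_of_nonneg_left (le_max_right u v) (sub_nonneg.2 h1)]

/-- If `G` is bounded between positive constants, measurable in the first variable and continuous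
in the second, then `x ↦ ∫₀¹ R (R² + x²) G(R, x) dR`, scaled by `C > 0`, attains a minimum
on `[0, ∞)`. -/
lemma exists_forall_integral_le {C m M : ℝ} (hC : 0 < C) (hm : 0 < m) {G : ℝ → ℝ → ℝ}
    (hG : ∀ R x, G R x ∈ Set.Icc m M) (hmeas : ∀ x, Measurable fun R => G R x)
    (hcont : ∀ R, Continuous (G R)) :
    ∃ y : ℝ, 0 ≤ y ∧ ∀ x : ℝ, 0 ≤ x →
      ∫ R in (0 : ℝ)..1, C * R * (R ^ 2 + y ^ 2) * G R y ≤
        ∫ R in (0 : ℝ)..1, C * R * (R ^ 2 + x ^ 2) * G R x := by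
  set F : ℝ → ℝ → ℝ := fun x R => C * R * (R ^ 2 + x ^ 2) * G R x with hF
  have hFmeas : ∀ x, Measurable (F x) := fun x => by
    have := hmeas x
    simp only [hF]
    fun_prop
  have hbound : ∀ B x R : ℝ, x ^ 2 ≤ B → R ∈ Set.Icc (0 : ℝ) 1 → ‖F x R‖ ≤ C * (1 + B) * M := by
    rintro B x R hx ⟨h0, h1⟩
    obtain ⟨hl, hu⟩ := hG R x
    have hGpos : 0 < G R x := hm.trans_le hl
    have hR : R * (R ^ 2 + x ^ 2) ≤ 1 * (1 + B) := by
      gcongr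
      exact pow_le_one₀ h0 h1
    rw [Real.norm_of_nonneg (by simp only [hF]; positivity)]
    have hB : 0 ≤ B := (sq_nonneg x).trans hx
    calc F x R = C * (R * (R ^ 2 + x ^ 2)) * G R x := by simp only [hF]; ring
      _ ≤ C * (1 * (1 + B)) * M := by gcongr
      _ = C * (1 + B) * M := by ring
  have hmem : ∀ {R : ℝ}, R ∈ Set.uIoc (0 : ℝ) 1 → R ∈ Set.Icc (0 : ℝ) 1 := fun hR => by
    rw [Set.uIoc_of_le zero_le_one] at hR
    exact Set.Ioc_subset_Icc_self hR
  have hint : ∀ x, IntervalIntegrable (F x) volume 0 1 := fun x =>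
    (intervalIntegrable_const (c := C * (1 + x ^ 2) * M)).mono_fun'
      (hFmeas x).aestronglyMeasurable
      ((ae_restrict_iff' measurableSet_uIoc).2
        (.of_forall fun R hR => hbound _ x R le_rfl (hmem hR)))
  have hΦ : Continuous fun x => ∫ R in (0 : ℝ)..1, F x R := by
    refine continuous_iff_continuousAt.2 fun x₀ => ?_
    refine continuousAt_of_dominated_interval
      (bound := fun _ => C * (1 + (x₀ ^ 2 + 1)) * M)
      (.of_forall fun x => (hFmeas x).aestronglyMeasurable) ?_ intervalIntegrable_const
      (.of_forall fun R _ => ?_)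
    · have hev : ∀ᶠ x in nhds x₀, x ^ 2 < x₀ ^ 2 + 1 :=
        (continuous_pow 2).continuousAt.eventually_lt_const (lt_add_one _)
      filter_upwards [hev] with x hx
      exact .of_forall fun R hR => hbound _ x R hx.le (hmem hR)
    · have := hcont R
      simp only [hF]
      fun_prop
  have hlow : ∀ x, C * m / 2 * x ^ 2 ≤ ∫ R in (0 : ℝ)..1, F x R := fun x => by
    calc C * m / 2 * x ^ 2 = ∫ R in (0 : ℝ)..1, C * m * x ^ 2 * R := by
          rw [intervalIntegral.integral_const_mul, integral_id]
          ring
      _ ≤ _ := by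
          refine integral_mono_on zero_le_one (Continuous.intervalIntegrable (by fun_prop) _ _)
            (hint x) fun R hR => ?_
          have h0 := hR.1
          calc C * m * x ^ 2 * R = C * R * (0 + x ^ 2) * m := by ring
            _ ≤ F x R := by
              simp only [hF]
              gcongr
              · positivity
              · exact (hG R x).1
  have hlim : Filter.Tendsto (fun x : ℝ => ∫ R in (0 : ℝ)..1, F |x| R)
      (Filter.cocompact ℝ) Filter.atTop := by
    refine Filter.tendsto_atTop_mono (fun x => hlow |x|) ?_
    exact (((Filter.tendsto_pow_atTop two_ne_zero).comp
      (tendsto_norm_cocompact_atTop (E := ℝ))).const_mul_atTop (by positivity))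
  obtain ⟨y, hy⟩ := (hΦ.comp continuous_abs).exists_forall_le hlim
  refine ⟨|y|, abs_nonneg y, fun x hx => ?_⟩
  have hyx := hy x
  simp only [Function.comp_apply, abs_of_nonneg hx] at hyx
  exact hyx

/-- The kernel function `Γ` attains a minimum on `[0,∞)`: there exists
`h_n* ≥ 0` with `Γ(h_n*) ≤ Γ(h)` for all `h ≥ 0`. -/
theorem kernel_function_attains_minimum
    (a b η₀ η₁ K N₀ : ℝ) (ha : 0 < a) (hb : 0 < b) (hη₀ : 0 < η₀) (hη₁ : 0 < η₁)
    (hK : 0 < K) (hN₀ : 0 < N₀)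
    (θ P₀ L : ℝ → ℝ → ℝ) (Γ : ℝ → ℝ)
    (hθ : ∀ R h : ℝ, θ R h = (180 / π) * arctan (h / R))
    (hP₀ : ∀ R h : ℝ, P₀ R h = 1 / (1 + a * exp (-b * (θ R h - a))))
    (hL : ∀ R h : ℝ, L R h = K * (R ^ 2 + h ^ 2) * (η₁ + P₀ R h * (η₀ - η₁)))
    (hΓ : ∀ x : ℝ, Γ x = ∫ R in (0 : ℝ)..(1 : ℝ), 2 * π * R * L R x * N₀) :
    ∃ hn : ℝ, 0 ≤ hn ∧ ∀ h : ℝ, 0 ≤ h → Γ hn ≤ Γ h := by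
  have hP : ∀ R x, P₀ R x ∈ Set.Icc (0 : ℝ) 1 := fun R x => by
    rw [hP₀]
    exact logistic_mem_Icc ha _
  have hcont : ∀ R, Continuous (P₀ R) := fun R => by
    simp only [funext (hP₀ R), hθ]
    exact continuous_const.div (by fun_prop) fun x => by positivity
  have hmeas : ∀ x, Measurable fun R => P₀ R x := fun x => by
    simp only [hP₀, hθ]
    fun_prop
  obtain ⟨y, hy0, hy⟩ := exists_forall_integral_le (C := 2 * π * K * N₀) (by positivity)
    (lt_min hη₀ hη₁) (G := fun R x => η₁ + P₀ R x * (η₀ - η₁))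
    (fun R x => add_mul_sub_mem_Icc_min_max (hP R x) η₀ η₁)
    (fun x => ((hmeas x).mul_const _).const_add _)
    (fun R => continuous_const.add ((hcont R).mul continuous_const))
  have hΓ' : ∀ x, Γ x = ∫ R in (0 : ℝ)..1,
      2 * π * K * N₀ * R * (R ^ 2 + x ^ 2) * (η₁ + P₀ R x * (η₀ - η₁)) := fun x => by
    rw [hΓ]
    congr 1 with R
    rw [hL]
    ring
  exact ⟨y, hy0, fun x hx => by simpa only [hΓ'] using hy x hx⟩
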